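/- For every Z ⊆ V(G) with |Z| ≥ 2: Pr[φ ∈ 𝒮 and the image of φ is contained in Z] ≤ ((k−1)^{k−1} l^l/(m−1)^{m−1}) · μ(Z)² · (ρ(Z)/2) · max_{z ∈ Z} (ρ_Z(z))^{m−1}. -/

import Mathlib

open scoped BigOperators

/-- The arc relation of the oriented star `S_{k,l}` on `Fin (k+l+1)`:
vertex `0` is the center, vertices `1,…,k` are the out-leaves and
vertices `k+1,…,k+l` are the in-leaves. -/
def StarArc (k l : ℕ) (a b : Fin (k + l + 1)) : Prop :=
  (a.val = 0 ∧ 1 ≤ b.val ∧ b.val ≤ k) ∨ (b.val = 0 ∧ k + 1 ≤ a.val)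

/-- `φ` witnesses an induced copy of `S_{k,l}` in the digraph with arc relation `A`:
it is injective and maps arcs to arcs and non-arcs to non-arcs. -/
def IsStarEmb (k l : ℕ) {V : Type*} (A : V → V → Prop) (φ : Fin (k + l + 1) → V) : Prop :=
  Function.Injective φ ∧ ∀ a b, StarArc k l a b ↔ A (φ a) (φ b)

/-- `s(G)`: the probability that a uniformly random map `V(S_{k,l}) → V(G)`
induces a copy of `S_{k,l}`. -/
noncomputable def starProb (k l : ℕ) (V : Type*) [Fintype V] (A : V → V → Prop) : ℝ :=
  (Nat.card {φ : Fin (k + l + 1) → V // IsStarEmb k l A φ} : ℝ) /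
    (Fintype.card V : ℝ) ^ (k + l + 1)

/-- The probability that a uniformly random map induces a copy of `S_{k,l}`
and moreover has property `P`. -/
noncomputable def starProbOn (k l : ℕ) {V : Type*} [Fintype V] (A : V → V → Prop)
    (P : (Fin (k + l + 1) → V) → Prop) : ℝ :=
  (Nat.card {φ : Fin (k + l + 1) → V // IsStarEmb k l A φ ∧ P φ} : ℝ) /
    (Fintype.card V : ℝ) ^ (k + l + 1)

/-- `s(z→v) = Pr[φ ∈ 𝒮 | φ z = v]`. -/
noncomputable def sCond (k l : ℕ) {V : Type*} [Fintype V] (A : V → V → Prop)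
    (z : Fin (k + l + 1)) (v : V) : ℝ :=
  (Nat.card {φ : Fin (k + l + 1) → V // IsStarEmb k l A φ ∧ φ z = v} : ℝ) /
    (Fintype.card V : ℝ) ^ (k + l)

/-- `Pr[φ ∈ 𝒮 ∧ P φ | φ(c) = v]`, where `c = 0` is the center of the star. -/
noncomputable def sCondOn (k l : ℕ) {V : Type*} [Fintype V] (A : V → V → Prop) (v : V)
    (P : (Fin (k + l + 1) → V) → Prop) : ℝ :=
  (Nat.card {φ : Fin (k + l + 1) → V // IsStarEmb k l A φ ∧ φ 0 = v ∧ P φ} : ℝ) /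
    (Fintype.card V : ℝ) ^ (k + l)

/-- `s(v) = (s(c→v) + l·s(i→v) + k·s(o→v))/(m+1)`, where the center is `0`,
`k+1` is an in-leaf and `1` is an out-leaf. -/
noncomputable def sVert (k l : ℕ) {V : Type*} [Fintype V] (A : V → V → Prop) (v : V) : ℝ :=
  (sCond k l A 0 v + l * sCond k l A (Fin.ofNat (k + l + 1) (k + 1)) v
      + k * sCond k l A 1 v) / ((k : ℝ) + l + 1)

/-- `ρ(v)`: the proportion of vertices adjacent to `v`. -/
noncomputable def rho {V : Type*} [Fintype V] (A : V → V → Prop) (v : V) : ℝ :=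
  (Nat.card {u : V // A v u ∨ A u v} : ℝ) / (Fintype.card V : ℝ)

/-- `ρ⁺_B(v)`: the proportion of vertices that are out-neighbours of `v` lying in `B`. -/
noncomputable def rhoPIn {V : Type*} [Fintype V] (A : V → V → Prop) (B : Set V) (v : V) : ℝ :=
  (Nat.card {u : V // A v u ∧ u ∈ B} : ℝ) / (Fintype.card V : ℝ)

/-- `ρ⁻_B(v)`: the proportion of vertices that are in-neighbours of `v` lying in `B`. -/
noncomputable def rhoMIn {V : Type*} [Fintype V] (A : V → V → Prop) (B : Set V) (v : V) : ℝ :=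
  (Nat.card {u : V // A u v ∧ u ∈ B} : ℝ) / (Fintype.card V : ℝ)

/-- `ρ_B(v)`: the proportion of vertices adjacent to `v` lying in `B`. -/
noncomputable def rhoIn {V : Type*} [Fintype V] (A : V → V → Prop) (B : Set V) (v : V) : ℝ :=
  (Nat.card {u : V // (A v u ∨ A u v) ∧ u ∈ B} : ℝ) / (Fintype.card V : ℝ)

/-- `μ(B) = |B|/n`. -/
noncomputable def muSet {V : Type*} [Fintype V] (B : Set V) : ℝ :=
  (Nat.card B : ℝ) / (Fintype.card V : ℝ)

/-- `X`: the set of vertices of large degree, `ρ(v) ≥ 1/2`. -/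
def bigX {V : Type*} [Fintype V] (A : V → V → Prop) : Set V := {v | 1 / 2 ≤ rho A v}

/-- `Y = V(G) \ X`. -/
def bigY {V : Type*} [Fintype V] (A : V → V → Prop) : Set V := (bigX A)ᶜ

/-- `α = μ(X)`. -/
noncomputable def alphaX {V : Type*} [Fintype V] (A : V → V → Prop) : ℝ := muSet (bigX A)

/-- `D = min_{x ∈ X} ρ(x)`. -/
noncomputable def Dmin {V : Type*} [Fintype V] (A : V → V → Prop) : ℝ :=
  sInf (rho A '' bigX A)

/-- `β = max_{y ∈ Y} ρ_Y(y)`. -/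
noncomputable def betaY {V : Type*} [Fintype V] (A : V → V → Prop) : ℝ :=
  sSup ((fun y => rhoIn A (bigY A) y) '' bigY A)

/-- `γ = min_{x ∈ X} ρ⁻_Y(x)`. -/
noncomputable def gammaX {V : Type*} [Fintype V] (A : V → V → Prop) : ℝ :=
  sInf ((fun x => rhoMIn A (bigY A) x) '' bigX A)

/-- `S = (m+1)·min_{v ∈ V(G)} s(v)`. -/
noncomputable def Smin (k l : ℕ) {V : Type*} [Fintype V] (A : V → V → Prop) : ℝ :=
  ((k : ℝ) + l + 1) * sInf (Set.range (sVert k l A))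

/-- `S₁ = min_{x ∈ X} (ρ⁺_Y(x))^k (ρ⁻_Y(x))^l`. -/
noncomputable def S1min (k l : ℕ) {V : Type*} [Fintype V] (A : V → V → Prop) : ℝ :=
  sInf ((fun x => rhoPIn A (bigY A) x ^ k * rhoMIn A (bigY A) x ^ l) '' bigX A)

/-- `S₂ = S₁ − ((m−1)/((m+1)·C(m,k)))·(α+β)(1−α)(1−D)^{m−2}`. -/
noncomputable def S2min (k l : ℕ) {V : Type*} [Fintype V] (A : V → V → Prop) : ℝ :=
  S1min k l A - (((k : ℝ) + l - 1) / (((k : ℝ) + l + 1) * (Nat.choose (k + l) k : ℝ)))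
    * (alphaX A + betaY A) * (1 - alphaX A) * (1 - Dmin A) ^ (k + l - 2)

/-- `λ₀ = k^k l^l / m^m`. -/
noncomputable def lam0 (k l : ℕ) : ℝ := (k : ℝ) ^ k * (l : ℝ) ^ l / ((k : ℝ) + l) ^ (k + l)

/-- `λ₁ = k^k l (l−1)^{l−1} / (m−1)^{m−1}` (with the convention `0⁰ = 1`). -/
noncomputable def lam1 (k l : ℕ) : ℝ :=
  (k : ℝ) ^ k * (l : ℝ) * ((l : ℝ) - 1) ^ (l - 1) / ((k : ℝ) + l - 1) ^ (k + l - 1)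

/-- The edge density `ρ(Z)` of a set of vertices `Z`: the number of unordered adjacent
pairs in `Z` divided by `C(|Z|,2)`. -/
noncomputable def densSet {V : Type*} [Fintype V] (A : V → V → Prop) (Z : Set V) : ℝ :=
  ((Nat.card {p : V × V // p.1 ∈ Z ∧ p.2 ∈ Z ∧ (A p.1 p.2 ∨ A p.2 p.1)} : ℝ) / 2) /
    (Nat.choose (Nat.card Z) 2 : ℝ)

/-- `d = 1 − (E_{x ∈ X} ρ⁻_Y(x))/(1−α)`. -/
noncomputable def dXY {V : Type*} [Fintype V] (A : V → V → Prop) : ℝ :=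
  1 - ((∑ᶠ x ∈ bigX A, rhoMIn A (bigY A) x) / (Nat.card (bigX A) : ℝ)) / (1 - alphaX A)

/-- `OPT(k,l)`. -/
noncomputable def OPT (k l : ℕ) : ℝ :=
  if k = l then
    (1 / 2 ^ (2 * k)) *
      sSup {y : ℝ | ∃ a ∈ Set.Icc (0 : ℝ) 1, y = a * (1 - a) ^ (2 * k) + (1 - a) * a ^ (2 * k)}
  else
    sSup {y : ℝ | ∃ a ∈ Set.Icc (0 : ℝ) (1 / 2),
      ∃ d ∈ Set.Icc (0 : ℝ) ((k : ℝ) / ((k : ℝ) + (l : ℝ))),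
      y = a * (1 - a) ^ (k + l) * d ^ k * (1 - d) ^ l
        + (((k : ℝ) - 1) ^ (k - 1) * (l : ℝ) ^ l / ((k : ℝ) + (l : ℝ) - 1) ^ (k + l - 1))
          * (1 - a) * a ^ (k + l) * (1 - d)}

theorem aux_amgm (s t : ℕ) (hs : 1 ≤ s) (ht : 1 ≤ t) (a b : ℝ) (ha : 0 ≤ a) (hb : 0 ≤ b) :
    a ^ s * b ^ t ≤ ((s : ℝ) ^ s * (t : ℝ) ^ t / ((s : ℝ) + t) ^ (s + t)) * (a + b) ^ (s + t) := by
  have hs' : (0 : ℝ) < s := by exact_mod_cast hs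
  have ht' : (0 : ℝ) < t := by exact_mod_cast ht
  have hst : (0 : ℝ) < (s : ℝ) + t := by positivity
  have h := Real.geom_mean_le_arith_mean2_weighted (w₁ := s / ((s : ℝ) + t))
    (w₂ := t / ((s : ℝ) + t)) (p₁ := a / s) (p₂ := b / t) (by positivity) (by positivity)
    (by positivity) (by positivity) (by field_simp)
  have h2 : (s : ℝ) / (s + t) * (a / s) + t / (s + t) * (b / t) = (a + b) / (s + t) := by
    field_simp
  rw [h2] at h
  have h3 := pow_le_pow_left₀ (by positivity) h (s + t)
  have key : ∀ (x : ℝ) (r : ℕ), 0 ≤ x → (x ^ ((r : ℝ) / (s + t))) ^ (s + t) = x ^ r := by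
    intro x r hx
    rw [← Real.rpow_natCast, ← Real.rpow_mul hx]
    push_cast
    rw [div_mul_cancel₀ _ hst.ne', Real.rpow_natCast]
  rw [mul_pow, key _ _ (by positivity), key _ _ (by positivity), div_pow, div_pow, div_pow] at h3
  have h4 : a ^ s * b ^ t = (s : ℝ) ^ s * (t : ℝ) ^ t * (a ^ s / s ^ s * (b ^ t / t ^ t)) := by
    field_simp
  rw [h4]
  calc _ ≤ (s : ℝ) ^ s * (t : ℝ) ^ t * ((a + b) ^ (s + t) / (s + t) ^ (s + t)) := by gcongr
    _ = _ := by ring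

theorem aux_count (k l : ℕ) (hk : 1 ≤ k) (V : Type) [Fintype V] (A : V → V → Prop) (Z : Set V) :
    Nat.card {φ : Fin (k + l + 1) → V // IsStarEmb k l A φ ∧ ∀ a, φ a ∈ Z}
      ≤ ∑ v : V, Nat.card {u : V // A v u ∧ u ∈ Z ∧ v ∈ Z} ^ k
          * Nat.card {u : V // A u v ∧ u ∈ Z} ^ l := by
  classical
  have e : ∑ v : V, Nat.card {u : V // A v u ∧ u ∈ Z ∧ v ∈ Z} ^ k
          * Nat.card {u : V // A u v ∧ u ∈ Z} ^ l =
      Nat.card (Σ v : V, (Fin k → {u : V // A v u ∧ u ∈ Z ∧ v ∈ Z}) ×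
        (Fin l → {u : V // A u v ∧ u ∈ Z})) := by
    rw [Nat.card_sigma]
    simp [Nat.card_prod, Nat.card_fun]
  rw [e]
  let o : Fin k → Fin (k + l + 1) := fun i => ⟨i.val + 1, by omega⟩
  let p : Fin l → Fin (k + l + 1) := fun i => ⟨k + i.val + 1, by omega⟩
  have ho : ∀ i, StarArc k l 0 (o i) := by
    intro i
    have hi := i.isLt
    exact Or.inl ⟨rfl, Nat.succ_le_succ (Nat.zero_le _), hi⟩
  have hp : ∀ i, StarArc k l (p i) 0 := by
    intro i
    exact Or.inr ⟨rfl, Nat.succ_le_succ (Nat.le_add_right _ _)⟩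
  refine Nat.card_le_card_of_injective (fun φ => ⟨φ.1 0,
    fun i => ⟨φ.1 (o i), (φ.2.1.2 _ _).1 (ho i), φ.2.2 _, φ.2.2 _⟩,
    fun i => ⟨φ.1 (p i), (φ.2.1.2 _ _).1 (hp i), φ.2.2 _⟩⟩) ?_
  rintro ⟨φ, hφ⟩ ⟨ψ, hψ⟩ h
  -- compare through the forgetful map
  let F : (Σ v : V, (Fin k → {u : V // A v u ∧ u ∈ Z ∧ v ∈ Z}) ×
        (Fin l → {u : V // A u v ∧ u ∈ Z})) → V × (Fin k → V) × (Fin l → V) :=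
    fun x => (x.1, fun i => (x.2.1 i).1, fun i => (x.2.2 i).1)
  have h' := congrArg F h
  simp only [F, Prod.mk.injEq] at h'
  obtain ⟨h0, h1, h2⟩ := h'
  apply Subtype.ext
  funext a
  show φ a = ψ a
  by_cases ha0 : a.val = 0
  · have : a = 0 := Fin.ext ha0
    rw [this]; exact h0
  by_cases hak : a.val ≤ k
  · have := congrFun h1 ⟨a.val - 1, by omega⟩
    have ea : o ⟨a.val - 1, by omega⟩ = a := Fin.ext (by simp only [o]; omega)
    simpa [ea] using this
  · have := congrFun h2 ⟨a.val - 1 - k, by omega⟩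
    have ea : p ⟨a.val - 1 - k, by omega⟩ = a := Fin.ext (by simp only [p]; omega)
    simpa [ea] using this

theorem aux_edges (V : Type) [Fintype V] (A : V → V → Prop)
    (hopp : ∀ u v, A u v → ¬ A v u) (Z : Set V) :
    2 * ∑ v : V, Nat.card {u : V // A v u ∧ u ∈ Z ∧ v ∈ Z} ≤
      Nat.card {p : V × V // p.1 ∈ Z ∧ p.2 ∈ Z ∧ (A p.1 p.2 ∨ A p.2 p.1)} := by
  classical
  rw [← Nat.card_sigma, two_mul, ← Nat.card_sum]
  refine Nat.card_le_card_of_injective (Sum.elim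
    (fun x => ⟨(x.1, x.2.1), x.2.2.2.2, x.2.2.2.1, Or.inl x.2.2.1⟩)
    (fun x => ⟨(x.2.1, x.1), x.2.2.2.1, x.2.2.2.2, Or.inr x.2.2.1⟩)) ?_
  rintro (⟨v, u, hu⟩ | ⟨v, u, hu⟩) (⟨v', u', hu'⟩ | ⟨v', u', hu'⟩) h
  · simp at h
    obtain ⟨rfl, rfl⟩ := h
    rfl
  · simp at h
    obtain ⟨rfl, rfl⟩ := h
    exact absurd hu'.1 (hopp _ _ hu.1)
  · simp at h
    obtain ⟨rfl, rfl⟩ := h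
    exact absurd hu'.1 (hopp _ _ hu.1)
  · simp at h
    obtain ⟨rfl, rfl⟩ := h
    rfl

theorem aux_deg (V : Type) [Fintype V] (A : V → V → Prop)
    (hopp : ∀ u v, A u v → ¬ A v u) (Z : Set V) (v : V) :
    Nat.card {u : V // A v u ∧ u ∈ Z ∧ v ∈ Z} + Nat.card {u : V // A u v ∧ u ∈ Z} ≤
      Nat.card {u : V // (A v u ∨ A u v) ∧ u ∈ Z} := by
  classical
  rw [← Nat.card_sum]
  refine Nat.card_le_card_of_injective (Sum.elim
    (fun x => ⟨x.1, Or.inl x.2.1, x.2.2.1⟩)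
    (fun x => ⟨x.1, Or.inr x.2.1, x.2.2⟩)) ?_
  rintro (⟨u, hu⟩ | ⟨u, hu⟩) (⟨u', hu'⟩ | ⟨u', hu'⟩) h
  · simp at h
    subst h
    rfl
  · simp at h
    subst h
    exact absurd hu'.1 (hopp _ _ hu.1)
  · simp at h
    subst h
    exact absurd hu'.1 (hopp _ _ hu.1)
  · simp at h
    subst h
    rfl

theorem stmt18 (k l : ℕ) (hl : 1 ≤ l) (hlk : l ≤ k) (hm : 6 ≤ k + l)
    (V : Type) [Fintype V] (A : V → V → Prop)
    (hirr : Irreflexive A) (hopp : ∀ u v, A u v → ¬ A v u) (hn : 1 ≤ Fintype.card V)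
    (Z : Set V) (hZ : 2 ≤ Nat.card Z) :
    starProbOn k l A (fun φ => ∀ a, φ a ∈ Z)
      ≤ (((k : ℝ) - 1) ^ (k - 1) * (l : ℝ) ^ l / ((k : ℝ) + l - 1) ^ (k + l - 1))
          * muSet Z ^ 2 * (densSet A Z / 2)
          * sSup ((fun z => rhoIn A Z z ^ (k + l - 1)) '' Z) := by
  classical
  set c : ℝ := ((k : ℝ) - 1) ^ (k - 1) * (l : ℝ) ^ l / ((k : ℝ) + l - 1) ^ (k + l - 1) with hc
  set S : ℝ := sSup ((fun z => rhoIn A Z z ^ (k + l - 1)) '' Z) with hS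
  have hk : 3 ≤ k := by omega
  have hkR : (3 : ℝ) ≤ k := by exact_mod_cast hk
  have hc0 : 0 ≤ c := by
    have h1 : (0 : ℝ) ≤ (k : ℝ) - 1 := by linarith
    have h2 : (0 : ℝ) ≤ (k : ℝ) + l - 1 := by
      have : (0 : ℝ) ≤ l := Nat.cast_nonneg l
      linarith
    positivity
  have hn0 : (0 : ℝ) < Fintype.card V := by exact_mod_cast hn
  set n : ℝ := (Fintype.card V : ℝ) with hndef
  have hSle : ∀ z ∈ Z, rhoIn A Z z ^ (k + l - 1) ≤ S := fun z hz =>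
    le_csSup (Set.toFinite _).bddAbove ⟨z, hz, rfl⟩
  have hS0 : 0 ≤ S := by
    apply Real.sSup_nonneg
    rintro _ ⟨z, -, rfl⟩
    simp only [rhoIn]
    positivity
  set P : V → ℕ := fun v => Nat.card {u : V // A v u ∧ u ∈ Z ∧ v ∈ Z} with hP
  set Q : V → ℕ := fun v => Nat.card {u : V // A u v ∧ u ∈ Z} with hQ
  set N : ℕ := Nat.card {φ : Fin (k + l + 1) → V // IsStarEmb k l A φ ∧ ∀ a, φ a ∈ Z} with hN
  have hcount : (N : ℝ) ≤ ∑ v : V, (P v : ℝ) ^ k * (Q v : ℝ) ^ l := by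
    exact_mod_cast aux_count k l (by omega) V A Z
  have hterm : ∀ v, (P v : ℝ) ^ k * (Q v : ℝ) ^ l ≤ (P v : ℝ) * (c * (S * n ^ (k + l - 1))) := by
    intro v
    by_cases hv : v ∈ Z
    · have e1 : (P v : ℝ) ^ k = P v * (P v : ℝ) ^ (k - 1) := by
        rw [← pow_succ']; congr 1; omega
      rw [e1, mul_assoc]
      apply mul_le_mul_of_nonneg_left _ (Nat.cast_nonneg _)
      have h := aux_amgm (k - 1) l (by omega) hl (P v) (Q v) (Nat.cast_nonneg _) (Nat.cast_nonneg _)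
      have e2 : k - 1 + l = k + l - 1 := by omega
      have e3 : ((k - 1 : ℕ) : ℝ) = (k : ℝ) - 1 := by
        rw [Nat.cast_sub (by omega)]; simp
      have e4 : (k : ℝ) - 1 + l = k + l - 1 := by ring
      rw [e2, e3, e4] at h
      refine h.trans (mul_le_mul_of_nonneg_left ?_ hc0)
      have hd : (P v : ℝ) + Q v ≤ rhoIn A Z v * n := by
        simp only [rhoIn]
        rw [div_mul_cancel₀ _ hn0.ne']
        exact_mod_cast aux_deg V A hopp Z v
      calc ((P v : ℝ) + Q v) ^ (k + l - 1) ≤ (rhoIn A Z v * n) ^ (k + l - 1) :=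
            pow_le_pow_left₀ (by positivity) hd _
        _ = rhoIn A Z v ^ (k + l - 1) * n ^ (k + l - 1) := mul_pow _ _ _
        _ ≤ _ := mul_le_mul_of_nonneg_right (hSle v hv) (by positivity)
    · have : P v = 0 := by simp [hP, hv]
      rw [this, Nat.cast_zero, zero_pow (by omega), zero_mul, zero_mul]
  have hN2 : (N : ℝ) ≤ (∑ v : V, (P v : ℝ)) * (c * (S * n ^ (k + l - 1))) := by
    rw [Finset.sum_mul]
    exact hcount.trans (Finset.sum_le_sum fun v _ => hterm v)
  set E : ℝ := ∑ v : V, (P v : ℝ) with hE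
  set T : ℕ := Nat.card {p : V × V // p.1 ∈ Z ∧ p.2 ∈ Z ∧ (A p.1 p.2 ∨ A p.2 p.1)} with hT
  have hET : 2 * E ≤ T := by
    rw [hE, hT]
    exact_mod_cast aux_edges V A hopp Z
  have hE0 : 0 ≤ E := by positivity
  have hz : (2 : ℝ) ≤ (Nat.card Z : ℝ) := by exact_mod_cast hZ
  have hdens : E / n ^ 2 ≤ muSet Z ^ 2 * (densSet A Z / 2) := by
    have e : muSet Z ^ 2 * (densSet A Z / 2) =
        ((T : ℝ) / 2) * ((Nat.card Z : ℝ) / ((Nat.card Z : ℝ) - 1)) / n ^ 2 := by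
      simp only [muSet, densSet]
      rw [Nat.cast_choose_two, ← hT, ← hndef]
      have : (Nat.card Z : ℝ) - 1 ≠ 0 := by linarith
      have : (Nat.card Z : ℝ) ≠ 0 := by linarith
      field_simp
    rw [e]
    apply div_le_div_of_nonneg_right _ (by positivity)
    have h1 : 1 ≤ (Nat.card Z : ℝ) / ((Nat.card Z : ℝ) - 1) := by
      rw [le_div_iff₀ (by linarith)]; linarith
    calc E ≤ (T : ℝ) / 2 := by linarith
      _ ≤ _ := le_mul_of_one_le_right (by positivity) h1
  have hpow : n ^ (k + l + 1) = n ^ (k + l - 1) * n ^ 2 := by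
    rw [← pow_add]; congr 1; omega
  calc starProbOn k l A (fun φ => ∀ a, φ a ∈ Z) = (N : ℝ) / n ^ (k + l + 1) := rfl
    _ ≤ E * (c * (S * n ^ (k + l - 1))) / n ^ (k + l + 1) := by gcongr
    _ = c * (E / n ^ 2) * S := by rw [hpow]; field_simp
    _ ≤ c * (muSet Z ^ 2 * (densSet A Z / 2)) * S := by gcongr
    _ = _ := by ring
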